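/- arXiv:2509.02162 — 2 statements merged into one kernel-verified Lean document; each statement's English description precedes it below -/
import Mathlib

section
/- Let 1 ≤ p < ∞, let X ⊂ L^p_+(ℝⁿ), let T : 𝒱(ℝⁿ) → 𝒱(ℝⁿ) be a rearrangement, and let 𝒲 be a family of rearrangements from 𝒱(ℝⁿ) to 𝒱(ℝⁿ). Then T is weakly approximable in Lᵖ on X by maps in 𝒲 if and only if T is weakly approximable in Lᵖ on cl_p X, the closure of X in the Lᵖ norm, by maps in 𝒲. The same equivalence holds with 'weakly approximable' replaced throughout by 'approximable' or by 'sequentially approximable'. -/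
open MeasureTheory Filter Topology
open scoped ENNReal

noncomputable section

abbrev Euc (n : ℕ) : Type := EuclideanSpace ℝ (Fin n)

/-- Membership in `𝒱(ℝⁿ)`: nonnegative measurable functions vanishing at infinity. -/
def inV {n : ℕ} (f : Euc n → ℝ) : Prop :=
  Measurable f ∧ 0 ≤ f ∧ ∀ t : ℝ, 0 < t → volume {x | t < f x} ≠ ⊤

/-- A rearrangement: a map of `𝒱(ℝⁿ)` to itself that is equimeasurable and monotonic. -/
def IsRearrangement {n : ℕ} (T : (Euc n → ℝ) → Euc n → ℝ) : Prop :=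
  (∀ f, inV f → inV (T f)) ∧
  (∀ f, inV f → ∀ t : ℝ, volume {x | t < T f x} = volume {x | t < f x}) ∧
  (∀ f g, inV f → inV g → (∀ᵐ x ∂volume, f x ≤ g x) →
    ∀ᵐ x ∂volume, T f x ≤ T g x)

/-- Membership in `L^p_+(ℝⁿ)`. -/
def inLpPlus {n : ℕ} (p : ℝ≥0∞) (f : Euc n → ℝ) : Prop :=
  Measurable f ∧ 0 ≤ f ∧ eLpNorm f p volume ≠ ⊤

/-- The closure of `X` in the `Lᵖ` norm. -/
def clLp {n : ℕ} (p : ℝ≥0∞) (X : Set (Euc n → ℝ)) : Set (Euc n → ℝ) :=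
  {f | inLpPlus p f ∧ ∀ ε : ℝ≥0∞, 0 < ε → ∃ g ∈ X, eLpNorm (f - g) p volume < ε}

/-- `T` is weakly approximable in `Lᵖ` on `Y` by maps in `𝒲`. -/
def WeakApproxLp {n : ℕ} (p : ℝ≥0∞) (T : (Euc n → ℝ) → Euc n → ℝ)
    (𝒲 : Set ((Euc n → ℝ) → Euc n → ℝ)) (Y : Set (Euc n → ℝ)) : Prop :=
  ∀ f ∈ Y, ∃ S : ℕ → (Euc n → ℝ) → Euc n → ℝ, (∀ k, S k ∈ 𝒲) ∧
    Tendsto (fun k => eLpNorm (S k f - T f) p volume) atTop (𝓝 0)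

/-- `T` is approximable in `Lᵖ` on `Y` by maps in `𝒲`. -/
def ApproxLp {n : ℕ} (p : ℝ≥0∞) (T : (Euc n → ℝ) → Euc n → ℝ)
    (𝒲 : Set ((Euc n → ℝ) → Euc n → ℝ)) (Y : Set (Euc n → ℝ)) : Prop :=
  ∃ S : ℕ → (Euc n → ℝ) → Euc n → ℝ, (∀ k, S k ∈ 𝒲) ∧
    ∀ f ∈ Y, Tendsto (fun k => eLpNorm (S k f - T f) p volume) atTop (𝓝 0)

/-- `S k ∘ ⋯ ∘ S 0`, the composition of the first `k + 1` maps of a sequence. -/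
def seqComp {α : Type*} (S : ℕ → α → α) : ℕ → α → α
  | 0 => S 0
  | k + 1 => S (k + 1) ∘ seqComp S k

/-- `T` is sequentially approximable in `Lᵖ` on `Y` by maps in `𝒲`. -/
def SeqApproxLp {n : ℕ} (p : ℝ≥0∞) (T : (Euc n → ℝ) → Euc n → ℝ)
    (𝒲 : Set ((Euc n → ℝ) → Euc n → ℝ)) (Y : Set (Euc n → ℝ)) : Prop :=
  ∃ S : ℕ → (Euc n → ℝ) → Euc n → ℝ, (∀ k, S k ∈ 𝒲) ∧
    ∀ f ∈ Y, Tendsto (fun k => eLpNorm (seqComp S k f - T f) p volume) atTop (𝓝 0)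

/-!
A rearrangement `T` sends superlevel sets to superlevel sets and does not shrink the intersection of
two of them, so it does not enlarge their difference. By Tonelli, `∫ (f - g - r)₊` is the integral
over `t > 0` of the measure of `{f > t + r} \ {g > t}`; hence `T` does not increase
`∫ (|f - g| - r)₊` for any `r ≥ 0`. As `d ^ q = ∫₀^∞ q (q - 1) r ^ (q - 2) (d - r)₊ dr` for `q > 1`,
`T` is nonexpansive in every `Lᵖ`, `1 ≤ p ≤ ∞`. An `ε / 3` argument then shows that convergence of
nonexpansive maps passes to closures.
-/

section

variable {α β E F : Type*} [MeasurableSpace α] [MeasurableSpace β] [NormedAddCommGroup E]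
  [NormedAddCommGroup F] {μ : Measure α} {ν : Measure β} {p : ℝ≥0∞}

section NormComparison

lemma hasDerivAt_mul_rpow_sub_mul_rpow (q d : ℝ) {r : ℝ} (hr : r ≠ 0) :
    HasDerivAt (fun r : ℝ => q * d * r ^ (q - 1) - (q - 1) * r ^ q)
      (q * (q - 1) * r ^ (q - 2) * (d - r)) r := by
  have hpow : r ^ (q - 1) = r ^ (q - 2) * r := by
    rw [← Real.rpow_add_one hr, show q - 2 + 1 = q - 1 by ring]
  refine (((Real.hasDerivAt_rpow_const (p := q - 1) (.inl hr)).const_mul (q * d)).sub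
    ((Real.hasDerivAt_rpow_const (p := q) (.inl hr)).const_mul (q - 1))).congr_deriv ?_
  rw [show q - 1 - 1 = q - 2 by ring, hpow]
  ring

lemma lintegral_Ioi_rpow_mul_sub {q d : ℝ} (hq : 1 < q) (hd : 0 ≤ d) :
    ∫⁻ r in Set.Ioi 0, ENNReal.ofReal (q * (q - 1) * r ^ (q - 2)) * ENNReal.ofReal (d - r) =
      ENNReal.ofReal (d ^ q) := by
  let primitive (r : ℝ) : ℝ := q * d * r ^ (q - 1) - (q - 1) * r ^ q
  let density (r : ℝ) : ℝ := q * (q - 1) * r ^ (q - 2) * (d - r)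
  have hweight : ∀ r : ℝ, 0 ≤ r → 0 ≤ q * (q - 1) * r ^ (q - 2) := fun r hr =>
    mul_nonneg (mul_nonneg (by linarith) (by linarith)) (Real.rpow_nonneg hr _)
  have hcont : ContinuousOn primitive (Set.Icc 0 d) :=
    ((continuous_const.mul (Real.continuous_rpow_const (by linarith))).sub
      (continuous_const.mul (Real.continuous_rpow_const (by linarith)))).continuousOn
  have hderiv : ∀ r ∈ Set.Ioo 0 d, HasDerivAt primitive (density r) r := fun r hr =>
    hasDerivAt_mul_rpow_sub_mul_rpow q d hr.1.ne'
  have hnonneg : ∀ r ∈ Set.Ioc 0 d, 0 ≤ density r := fun r hr =>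
    mul_nonneg (hweight r hr.1.le) (sub_nonneg.2 hr.2)
  have hint : IntegrableOn density (Set.Ioc 0 d) :=
    intervalIntegral.integrableOn_deriv_of_nonneg hcont hderiv
      fun r hr => hnonneg r (Set.Ioo_subset_Ioc_self hr)
  have hvalue : ∫ r in Set.Ioc 0 d, density r = d ^ q := by
    rw [← intervalIntegral.integral_of_le hd,
      intervalIntegral.integral_eq_sub_of_hasDerivAt_of_le hd hcont hderiv
        ((intervalIntegrable_iff_integrableOn_Ioc_of_le hd).2 hint)]
    have hmul : d * d ^ (q - 1) = d ^ q := by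
      rw [mul_comm, ← Real.rpow_add_one' hd (by linarith), sub_add_cancel]
    simp only [primitive, Real.zero_rpow (show q ≠ 0 by linarith),
      Real.zero_rpow (show q - 1 ≠ 0 by linarith), mul_assoc, hmul]
    ring
  have htail : ∫⁻ r in Set.Ioi d,
      ENNReal.ofReal (q * (q - 1) * r ^ (q - 2)) * ENNReal.ofReal (d - r) = 0 :=
    setLIntegral_eq_zero measurableSet_Ioi fun r hr => by
      simp [ENNReal.ofReal_of_nonpos (sub_nonpos.2 (Set.mem_Ioi.1 hr).le)]
  rw [← Set.Ioc_union_Ioi_eq_Ioi hd, lintegral_union measurableSet_Ioi Set.Ioc_disjoint_Ioi_same,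
    htail, add_zero, ← hvalue, ofReal_integral_eq_lintegral_ofReal hint
      ((ae_restrict_iff' measurableSet_Ioc).2 (ae_of_all _ hnonneg))]
  exact setLIntegral_congr_fun measurableSet_Ioc fun r hr =>
    (ENNReal.ofReal_mul (hweight r hr.1.le)).symm

lemma lintegral_ofReal_rpow_eq_lintegral_Ioi [SFinite μ] {u : α → ℝ} (hu : AEMeasurable u μ)
    (hu_nonneg : 0 ≤ u) {q : ℝ} (hq : 1 < q) :
    ∫⁻ x, ENNReal.ofReal (u x ^ q) ∂μ = ∫⁻ r in Set.Ioi 0,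
      ENNReal.ofReal (q * (q - 1) * r ^ (q - 2)) * ∫⁻ x, ENNReal.ofReal (u x - r) ∂μ := by
  simp_rw [← lintegral_Ioi_rpow_mul_sub hq (hu_nonneg _)]
  rw [lintegral_lintegral_swap]
  · exact lintegral_congr fun r => lintegral_const_mul'' _ (hu.sub_const r).ennreal_ofReal
  · exact (Measurable.aemeasurable (by fun_prop)).mul
      ((hu.comp_quasiMeasurePreserving Measure.quasiMeasurePreserving_fst).sub
        measurable_snd.aemeasurable).ennreal_ofReal

lemma eLpNormEssSup_le_of_forall_lintegral_norm_sub_le {u : α → E} {v : β → F}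
    (hu : AEStronglyMeasurable u μ)
    (h : ∀ r : ℝ, 0 ≤ r →
      ∫⁻ x, ENNReal.ofReal (‖u x‖ - r) ∂μ ≤ ∫⁻ y, ENNReal.ofReal (‖v y‖ - r) ∂ν) :
    eLpNormEssSup u μ ≤ eLpNormEssSup v ν := by
  rcases eq_or_ne (eLpNormEssSup v ν) ⊤ with htop | hfin
  · exact htop ▸ le_top
  set M : ℝ := (eLpNormEssSup v ν).toReal
  have hv_le : ∀ᵐ y ∂ν, ‖v y‖ ≤ M := by
    filter_upwards [ae_le_eLpNormEssSup (f := v) (μ := ν)] with y hy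
    simpa using ENNReal.toReal_mono hfin hy
  have hv_zero : ∫⁻ y, ENNReal.ofReal (‖v y‖ - M) ∂ν = 0 :=
    lintegral_eq_zero_of_ae_eq_zero <| hv_le.mono fun y hy =>
      ENNReal.ofReal_of_nonpos (sub_nonpos.2 hy)
  have hu_zero : ∫⁻ x, ENNReal.ofReal (‖u x‖ - M) ∂μ = 0 :=
    le_zero_iff.1 ((h M ENNReal.toReal_nonneg).trans_eq hv_zero)
  have hu_le : ∀ᵐ x ∂μ, ‖u x‖ ≤ M := by
    filter_upwards [(lintegral_eq_zero_iff' (hu.norm.aemeasurable.sub_const M).ennreal_ofReal).1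
      hu_zero] with x hx
    exact sub_nonpos.1 (ENNReal.ofReal_eq_zero.1 hx)
  exact (eLpNormEssSup_le_of_ae_bound hu_le).trans_eq (ENNReal.ofReal_toReal hfin)

lemma lintegral_ofReal_rpow_le_of_forall_lintegral_sub_le [SFinite μ] [SFinite ν]
    {u : α → ℝ} {v : β → ℝ} (hu : AEMeasurable u μ) (hv : AEMeasurable v ν)
    (hu_nonneg : 0 ≤ u) (hv_nonneg : 0 ≤ v)
    (h : ∀ r : ℝ, 0 ≤ r →
      ∫⁻ x, ENNReal.ofReal (u x - r) ∂μ ≤ ∫⁻ y, ENNReal.ofReal (v y - r) ∂ν)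
    {q : ℝ} (hq : 1 ≤ q) :
    ∫⁻ x, ENNReal.ofReal (u x ^ q) ∂μ ≤ ∫⁻ y, ENNReal.ofReal (v y ^ q) ∂ν := by
  rcases hq.eq_or_lt with rfl | hq
  · simpa using h 0 le_rfl
  rw [lintegral_ofReal_rpow_eq_lintegral_Ioi hu hu_nonneg hq,
    lintegral_ofReal_rpow_eq_lintegral_Ioi hv hv_nonneg hq]
  exact setLIntegral_mono' measurableSet_Ioi fun r hr => mul_le_mul_right (h r hr.le) _

theorem eLpNorm_le_of_forall_lintegral_norm_sub_le [SFinite μ] [SFinite ν]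
    {u : α → E} {v : β → F} (hu : AEStronglyMeasurable u μ) (hv : AEStronglyMeasurable v ν)
    (h : ∀ r : ℝ, 0 ≤ r →
      ∫⁻ x, ENNReal.ofReal (‖u x‖ - r) ∂μ ≤ ∫⁻ y, ENNReal.ofReal (‖v y‖ - r) ∂ν)
    (hp : 1 ≤ p) : eLpNorm u p μ ≤ eLpNorm v p ν := by
  rcases eq_or_ne p ⊤ with rfl | hp_top
  · simpa only [eLpNorm_exponent_top] using eLpNormEssSup_le_of_forall_lintegral_norm_sub_le hu h
  have hp_ne : p ≠ 0 := (zero_lt_one.trans_le hp).ne'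
  have hq : 1 ≤ p.toReal := by simpa using ENNReal.toReal_mono hp_top hp
  have hle := lintegral_ofReal_rpow_le_of_forall_lintegral_sub_le hu.norm.aemeasurable
    hv.norm.aemeasurable (fun x => norm_nonneg (u x)) (fun y => norm_nonneg (v y)) h hq
  simp_rw [← ENNReal.ofReal_rpow_of_nonneg (norm_nonneg _) (zero_le_one.trans hq),
    ofReal_norm] at hle
  rw [eLpNorm_eq_lintegral_rpow_enorm_toReal hp_ne hp_top,
    eLpNorm_eq_lintegral_rpow_enorm_toReal hp_ne hp_top]
  exact ENNReal.rpow_le_rpow hle (by positivity)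

end NormComparison

section Vanishing

/-- The class `𝒱(μ)` of nonnegative measurable functions vanishing at infinity with respect to an
arbitrary measure `μ`, on which rearrangements act; `f ∈ vanishing volume` unfolds to `inV f`. -/
def vanishing (μ : Measure α) : Set (α → ℝ) :=
  {f | Measurable f ∧ 0 ≤ f ∧ ∀ t : ℝ, 0 < t → μ {x | t < f x} ≠ ⊤}

lemma vanishing_of_le {f g : α → ℝ} (hf : f ∈ vanishing μ) (hg : Measurable g)
    (hg_nonneg : 0 ≤ g) (hgf : g ≤ f) : g ∈ vanishing μ :=
  ⟨hg, hg_nonneg, fun t ht => measure_ne_top_of_subset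
    (fun x (hx : t < g x) => hx.trans_le (hgf x)) (hf.2.2 t ht)⟩

lemma mem_vanishing_of_memLp {f : α → ℝ} (hf : Measurable f) (hf_nonneg : 0 ≤ f)
    (hfp : MemLp f p μ) (hp_ne : p ≠ 0) (hp_top : p ≠ ⊤) : f ∈ vanishing μ := by
  refine ⟨hf, hf_nonneg, fun t ht => measure_ne_top_of_subset (fun x (hx : t < f x) => ?_)
    (hfp.meas_ge_lt_top hp_ne hp_top (Real.toNNReal_pos.2 ht).ne').ne⟩
  exact (Real.toNNReal_le_toNNReal hx.le).trans (Real.toNNReal_le_iff_le_coe.2 (le_abs_self _))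

lemma lt_indicator_superlevel_iff {ι : Type*} {f : ι → ℝ} {s u : ℝ} (hu : 0 ≤ u) (hus : u ≤ s)
    (x : ι) :
    u < {y | s < f y}.indicator f x ↔ s < f x := by
  by_cases hx : s < f x
  · rw [Set.indicator_of_mem (show x ∈ {y | s < f y} from hx)]
    exact iff_of_true (hus.trans_lt hx) hx
  · rw [Set.indicator_of_notMem (show x ∉ {y | s < f y} from hx)]
    exact iff_of_false hu.not_gt hx

lemma indicator_superlevel_le {ι : Type*} {f : ι → ℝ} (hf_nonneg : 0 ≤ f) (s : ℝ) :
    {x | s < f x}.indicator f ≤ f :=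
  Set.indicator_le_self' fun x _ => hf_nonneg x

lemma indicator_superlevel_mem_vanishing {f : α → ℝ} (hf : f ∈ vanishing μ) (s : ℝ) :
    {x | s < f x}.indicator f ∈ vanishing μ :=
  vanishing_of_le hf (hf.1.indicator (measurableSet_lt measurable_const hf.1))
    (Set.indicator_nonneg fun x _ => hf.2.1 x) (indicator_superlevel_le hf.2.1 s)

lemma lintegral_ofReal_sub_sub_eq_lintegral_measure_diff [SFinite μ] {f g : α → ℝ}
    (hf : Measurable f) (hg : Measurable g) (hg_nonneg : 0 ≤ g) (r : ℝ) :
    ∫⁻ x, ENNReal.ofReal (f x - g x - r) ∂μ =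
      ∫⁻ t in Set.Ioi 0, μ ({x | t + r < f x} \ {x | t < g x}) := by
  let region : Set (α × ℝ) := {z | z.2 + r < f z.1} \ {z | z.2 < g z.1}
  have hregion : MeasurableSet region :=
    (measurableSet_lt (by fun_prop) (by fun_prop)).diff
      (measurableSet_lt (by fun_prop) (by fun_prop))
  have hslice (x : α) :
      volume.restrict (Set.Ioi 0) (Prod.mk x ⁻¹' region) = ENNReal.ofReal (f x - g x - r) := by
    have hIco : Prod.mk x ⁻¹' region = Set.Ico (g x) (f x - r) := by
      ext t
      simp only [region, Set.mem_preimage, Set.mem_sdiff, Set.mem_ofPred_eq, not_lt, Set.mem_Ico,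
        lt_sub_iff_add_lt, and_comm]
    have hIci : Set.Ico (g x) (f x - r) ⊆ Set.Ici 0 := fun t ht => (hg_nonneg x).trans ht.1
    rw [hIco, Measure.restrict_congr_set Ioi_ae_eq_Ici, Measure.restrict_apply measurableSet_Ico,
      Set.inter_eq_left.2 hIci, Real.volume_Ico, sub_right_comm]
  calc ∫⁻ x, ENNReal.ofReal (f x - g x - r) ∂μ
      = μ.prod (volume.restrict (Set.Ioi 0)) region := by
        simp_rw [Measure.prod_apply hregion, hslice]
    _ = ∫⁻ t in Set.Ioi 0, μ ({x | t + r < f x} \ {x | t < g x}) :=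
        Measure.prod_apply_symm hregion

lemma lintegral_ofReal_abs_sub_sub {f g : α → ℝ} (hf : Measurable f) (hg : Measurable g) {r : ℝ}
    (hr : 0 ≤ r) :
    ∫⁻ x, ENNReal.ofReal (|f x - g x| - r) ∂μ =
      ∫⁻ x, ENNReal.ofReal (f x - g x - r) ∂μ + ∫⁻ x, ENNReal.ofReal (g x - f x - r) ∂μ := by
  rw [← lintegral_add_left (by fun_prop)]
  refine lintegral_congr fun x => ?_
  rcases le_total (g x) (f x) with h | h
  · rw [abs_of_nonneg (sub_nonneg.2 h), ENNReal.ofReal_of_nonpos (p := g x - f x - r) (by linarith),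
      add_zero]
  · rw [abs_of_nonpos (sub_nonpos.2 h), neg_sub,
      ENNReal.ofReal_of_nonpos (p := f x - g x - r) (by linarith), zero_add]

end Vanishing

section Rearrangement

/-- A rearrangement between arbitrary measure spaces: an equimeasurable monotonic map from `𝒱(μ)`
to `𝒱(ν)`. As in `IsRearrangement`, the map is total, with irrelevant values off `𝒱(μ)`. -/
structure IsRearrangementMap (μ : Measure α) (ν : Measure β) (T : (α → ℝ) → β → ℝ) : Prop where
  mapsTo : Set.MapsTo T (vanishing μ) (vanishing ν)
  equimeasurable : ∀ f ∈ vanishing μ, ∀ t : ℝ, ν {y | t < T f y} = μ {x | t < f x}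
  monotone : ∀ f ∈ vanishing μ, ∀ g ∈ vanishing μ, f ≤ᵐ[μ] g → T f ≤ᵐ[ν] T g

namespace IsRearrangementMap

variable {T : (α → ℝ) → β → ℝ} {f g : α → ℝ}

lemma ae_lt_of_map_indicator_superlevel_pos (hT : IsRearrangementMap μ ν T)
    (hf : f ∈ vanishing μ) {s : ℝ} (hs : 0 < s) :
    ∀ᵐ y ∂ν, 0 < T ({x | s < f x}.indicator f) y → s < T f y := by
  set h : α → ℝ := {x | s < f x}.indicator f
  have hh : h ∈ vanishing μ := indicator_superlevel_mem_vanishing hf s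
  obtain ⟨hTh, -, hTh_fin⟩ := hT.mapsTo hh
  -- `h` takes no value in `(0, s]`, hence neither does its rearrangement, up to a null set.
  have hmeasure : ν {y | 0 < T h y} = ν {y | s < T h y} := by
    simp only [hT.equimeasurable h hh, h, lt_indicator_superlevel_iff le_rfl hs.le,
      lt_indicator_superlevel_iff hs.le le_rfl]
  have hset : {y | s < T h y} =ᵐ[ν] {y | 0 < T h y} :=
    ae_eq_of_subset_of_measure_ge (fun y hy => hs.trans hy) hmeasure.le
      (measurableSet_lt measurable_const hTh).nullMeasurableSet (hmeasure ▸ hTh_fin s hs)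
  filter_upwards [hset.mem_iff,
    hT.monotone h hh f hf (ae_of_all _ (indicator_superlevel_le hf.2.1 s))] with y hy hle hpos
  exact (hy.2 hpos).trans_le hle

lemma measure_inter_superlevel_le (hT : IsRearrangementMap μ ν T) (hf : f ∈ vanishing μ)
    (hg : g ∈ vanishing μ) {s t : ℝ} (hs : 0 < s) (ht : 0 < t) :
    μ ({x | s < f x} ∩ {x | t < g x}) ≤ ν ({y | s < T f y} ∩ {y | t < T g y}) := by
  have hf' := indicator_superlevel_mem_vanishing hf s
  have hg' := indicator_superlevel_mem_vanishing hg t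
  set m : α → ℝ := {x | s < f x}.indicator f ⊓ {x | t < g x}.indicator g
  have hm : m ∈ vanishing μ :=
    vanishing_of_le hf' (hf'.1.min hg'.1) (le_inf hf'.2.1 hg'.2.1) inf_le_left
  have hinter : {x | s < f x} ∩ {x | t < g x} = {x | 0 < m x} := by
    ext x
    simp only [m, Set.mem_inter_iff, Set.mem_ofPred_eq, Pi.inf_apply, lt_inf_iff,
      lt_indicator_superlevel_iff le_rfl hs.le, lt_indicator_superlevel_iff le_rfl ht.le]
  rw [hinter, ← hT.equimeasurable m hm 0]
  apply measure_mono_ae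
  filter_upwards [hT.ae_lt_of_map_indicator_superlevel_pos hf hs,
    hT.ae_lt_of_map_indicator_superlevel_pos hg ht,
    hT.monotone m hm _ hf' (ae_of_all _ fun _ => inf_le_left),
    hT.monotone m hm _ hg' (ae_of_all _ fun _ => inf_le_right)] with y hfy hgy hmf hmg hpos
  exact ⟨hfy (hpos.trans_le hmf), hgy (hpos.trans_le hmg)⟩

lemma measure_diff_superlevel_le (hT : IsRearrangementMap μ ν T) (hf : f ∈ vanishing μ)
    (hg : g ∈ vanishing μ) {s t : ℝ} (hs : 0 < s) (ht : 0 < t) :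
    ν ({y | s < T f y} \ {y | t < T g y}) ≤ μ ({x | s < f x} \ {x | t < g x}) := by
  have hfin : μ ({x | s < f x} ∩ {x | t < g x}) ≠ ⊤ :=
    measure_ne_top_of_subset Set.inter_subset_left (hf.2.2 s hs)
  refine (ENNReal.add_le_add_iff_left hfin).1 ?_
  calc μ ({x | s < f x} ∩ {x | t < g x}) + ν ({y | s < T f y} \ {y | t < T g y})
      ≤ ν ({y | s < T f y} ∩ {y | t < T g y}) + ν ({y | s < T f y} \ {y | t < T g y}) := by
        gcongr
        exact hT.measure_inter_superlevel_le hf hg hs ht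
    _ = ν {y | s < T f y} :=
        measure_inter_add_sdiff _ (measurableSet_lt measurable_const (hT.mapsTo hg).1)
    _ = μ {x | s < f x} := hT.equimeasurable f hf s
    _ = μ ({x | s < f x} ∩ {x | t < g x}) + μ ({x | s < f x} \ {x | t < g x}) :=
        (measure_inter_add_sdiff _ (measurableSet_lt measurable_const hg.1)).symm

variable [SFinite μ] [SFinite ν]

lemma lintegral_ofReal_sub_sub_le (hT : IsRearrangementMap μ ν T) (hf : f ∈ vanishing μ)
    (hg : g ∈ vanishing μ) {r : ℝ} (hr : 0 ≤ r) :
    ∫⁻ y, ENNReal.ofReal (T f y - T g y - r) ∂ν ≤ ∫⁻ x, ENNReal.ofReal (f x - g x - r) ∂μ := by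
  obtain ⟨hTg, hTg_nonneg, -⟩ := hT.mapsTo hg
  rw [lintegral_ofReal_sub_sub_eq_lintegral_measure_diff hf.1 hg.1 hg.2.1,
    lintegral_ofReal_sub_sub_eq_lintegral_measure_diff (hT.mapsTo hf).1 hTg hTg_nonneg]
  exact setLIntegral_mono' measurableSet_Ioi fun t ht =>
    hT.measure_diff_superlevel_le hf hg (add_pos_of_pos_of_nonneg ht hr) ht

lemma lintegral_ofReal_abs_sub_sub_le (hT : IsRearrangementMap μ ν T) (hf : f ∈ vanishing μ)
    (hg : g ∈ vanishing μ) {r : ℝ} (hr : 0 ≤ r) :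
    ∫⁻ y, ENNReal.ofReal (|T f y - T g y| - r) ∂ν ≤
      ∫⁻ x, ENNReal.ofReal (|f x - g x| - r) ∂μ := by
  rw [lintegral_ofReal_abs_sub_sub hf.1 hg.1 hr,
    lintegral_ofReal_abs_sub_sub (hT.mapsTo hf).1 (hT.mapsTo hg).1 hr]
  exact add_le_add (hT.lintegral_ofReal_sub_sub_le hf hg hr)
    (hT.lintegral_ofReal_sub_sub_le hg hf hr)

theorem eLpNorm_sub_le (hT : IsRearrangementMap μ ν T) (hf : f ∈ vanishing μ)
    (hg : g ∈ vanishing μ) (hp : 1 ≤ p) : eLpNorm (T f - T g) p ν ≤ eLpNorm (f - g) p μ :=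
  eLpNorm_le_of_forall_lintegral_norm_sub_le
    ((hT.mapsTo hf).1.sub (hT.mapsTo hg).1).aestronglyMeasurable
    (hf.1.sub hg.1).aestronglyMeasurable
    (fun _ hr => hT.lintegral_ofReal_abs_sub_sub_le hf hg hr) hp

end IsRearrangementMap

end Rearrangement

section Closure

/-- The closure of `X` in the `Lᵖ(μ)` norm, taken inside an ambient class `V` of functions. The
class replaces `inLpPlus` in `clLp` because `X` need not lie in `Lᵖ(μ)`, and because members of
`L^∞(μ)` need not vanish at infinity. -/
def lpClosureIn (p : ℝ≥0∞) (μ : Measure α) (V X : Set (α → E)) : Set (α → E) :=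
  {f | f ∈ V ∧ ∀ ε : ℝ≥0∞, 0 < ε → ∃ g ∈ X, eLpNorm (f - g) p μ < ε}

lemma subset_lpClosureIn {V X : Set (α → E)} (hX : X ⊆ V) : X ⊆ lpClosureIn p μ V X :=
  fun f hf => ⟨hX hf, fun ε hε => ⟨f, hf, by simpa only [sub_self, eLpNorm_zero] using hε⟩⟩

/-- Weak approximability in `Lᵖ(μ)` on `Y` by maps in `𝒲`, over an arbitrary measure space;
`WeakApproxLp` is the case of Lebesgue measure on `ℝⁿ`. -/
def WeakLpApproximable (p : ℝ≥0∞) (μ : Measure α) (T : (α → E) → α → E)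
    (𝒲 : Set ((α → E) → α → E)) (Y : Set (α → E)) : Prop :=
  ∀ f ∈ Y, ∃ S : ℕ → (α → E) → α → E, (∀ k, S k ∈ 𝒲) ∧
    Tendsto (fun k => eLpNorm (S k f - T f) p μ) atTop (𝓝 0)

/-- Approximability in `Lᵖ(μ)` on `Y` by maps in `𝒲`, over an arbitrary measure space;
`ApproxLp` is the case of Lebesgue measure on `ℝⁿ`. -/
def LpApproximable (p : ℝ≥0∞) (μ : Measure α) (T : (α → E) → α → E)
    (𝒲 : Set ((α → E) → α → E)) (Y : Set (α → E)) : Prop :=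
  ∃ S : ℕ → (α → E) → α → E, (∀ k, S k ∈ 𝒲) ∧
    ∀ f ∈ Y, Tendsto (fun k => eLpNorm (S k f - T f) p μ) atTop (𝓝 0)

/-- Sequential approximability in `Lᵖ(μ)` on `Y` by maps in `𝒲`, over an arbitrary measure space;
`SeqApproxLp` is the case of Lebesgue measure on `ℝⁿ`. -/
def SeqLpApproximable (p : ℝ≥0∞) (μ : Measure α) (T : (α → E) → α → E)
    (𝒲 : Set ((α → E) → α → E)) (Y : Set (α → E)) : Prop :=
  ∃ S : ℕ → (α → E) → α → E, (∀ k, S k ∈ 𝒲) ∧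
    ∀ f ∈ Y, Tendsto (fun k => eLpNorm (seqComp S k f - T f) p μ) atTop (𝓝 0)

/-- A self-map of the class `V` that does not increase `Lᵖ(μ)` distances between members of `V`: the
only property of rearrangements that the passage to closures uses. Measurability of the members of
`V` is included so that the triangle inequality for `eLpNorm` applies to them. -/
structure IsLpNonexpansiveOn (p : ℝ≥0∞) (μ : Measure α) (V : Set (α → E))
    (T : (α → E) → α → E) : Prop where
  mapsTo : Set.MapsTo T V V
  aestronglyMeasurable : ∀ f ∈ V, AEStronglyMeasurable f μ
  eLpNorm_sub_le : ∀ f ∈ V, ∀ g ∈ V, eLpNorm (T f - T g) p μ ≤ eLpNorm (f - g) p μ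

variable {V X : Set (α → E)} {T : (α → E) → α → E} {𝒲 : Set ((α → E) → α → E)}

lemma IsRearrangementMap.isLpNonexpansiveOn [SFinite μ] {R : (α → ℝ) → α → ℝ}
    (hR : IsRearrangementMap μ μ R) (hp : 1 ≤ p) : IsLpNonexpansiveOn p μ (vanishing μ) R :=
  ⟨hR.mapsTo, fun _ hf => hf.1.aestronglyMeasurable, fun _ hf _ hg => hR.eLpNorm_sub_le hf hg hp⟩

namespace IsLpNonexpansiveOn

lemma comp {R S : (α → E) → α → E} (hR : IsLpNonexpansiveOn p μ V R)
    (hS : IsLpNonexpansiveOn p μ V S) : IsLpNonexpansiveOn p μ V (R ∘ S) :=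
  ⟨hR.mapsTo.comp hS.mapsTo, hR.aestronglyMeasurable, fun f hf g hg =>
    (hR.eLpNorm_sub_le _ (hS.mapsTo hf) _ (hS.mapsTo hg)).trans (hS.eLpNorm_sub_le f hf g hg)⟩

protected lemma seqComp {S : ℕ → (α → E) → α → E} (hS : ∀ k, IsLpNonexpansiveOn p μ V (S k))
    (k : ℕ) : IsLpNonexpansiveOn p μ V (seqComp S k) := by
  induction k with
  | zero => exact hS 0
  | succ k ih => exact (hS (k + 1)).comp ih

lemma eLpNorm_map_sub_map_le {R : (α → E) → α → E} {f g : α → E} (hp : 1 ≤ p)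
    (hR : IsLpNonexpansiveOn p μ V R) (hT : IsLpNonexpansiveOn p μ V T) (hf : f ∈ V)
    (hg : g ∈ V) :
    eLpNorm (R f - T f) p μ ≤
      eLpNorm (f - g) p μ + eLpNorm (R g - T g) p μ + eLpNorm (f - g) p μ := by
  have hRf := hR.aestronglyMeasurable _ (hR.mapsTo hf)
  have hRg := hR.aestronglyMeasurable _ (hR.mapsTo hg)
  have hTf := hT.aestronglyMeasurable _ (hT.mapsTo hf)
  have hTg := hT.aestronglyMeasurable _ (hT.mapsTo hg)
  calc eLpNorm (R f - T f) p μ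
      = eLpNorm ((R f - R g) + (R g - T g) + (T g - T f)) p μ := by congr 1; abel
    _ ≤ eLpNorm (R f - R g) p μ + eLpNorm (R g - T g) p μ + eLpNorm (T g - T f) p μ :=
        (eLpNorm_add_le ((hRf.sub hRg).add (hRg.sub hTg)) (hTg.sub hTf) hp).trans <|
          add_le_add_left (eLpNorm_add_le (hRf.sub hRg) (hRg.sub hTg) hp) _
    _ ≤ eLpNorm (f - g) p μ + eLpNorm (R g - T g) p μ + eLpNorm (f - g) p μ := by
        rw [eLpNorm_sub_comm (T g)]
        gcongr
        exacts [hR.eLpNorm_sub_le f hf g hg, hT.eLpNorm_sub_le f hf g hg]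

lemma exists_forall_eLpNorm_map_sub_map_le (hp : 1 ≤ p) (hX : X ⊆ V)
    (hT : IsLpNonexpansiveOn p μ V T) {f : α → E} (hf : f ∈ lpClosureIn p μ V X) {ε : ℝ≥0∞}
    (hε : 0 < ε) :
    ∃ g ∈ X, ∃ δ > 0, ∀ R, IsLpNonexpansiveOn p μ V R →
      eLpNorm (R g - T g) p μ ≤ δ → eLpNorm (R f - T f) p μ ≤ ε := by
  have hε3 : 0 < ε / 3 := ENNReal.div_pos hε.ne' ENNReal.ofNat_ne_top
  obtain ⟨g, hg, hfg⟩ := hf.2 (ε / 3) hε3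
  refine ⟨g, hg, ε / 3, hε3, fun R hR hRg => ?_⟩
  calc eLpNorm (R f - T f) p μ
      ≤ eLpNorm (f - g) p μ + eLpNorm (R g - T g) p μ + eLpNorm (f - g) p μ :=
        eLpNorm_map_sub_map_le hp hR hT hf.1 (hX hg)
    _ ≤ ε / 3 + ε / 3 + ε / 3 := by gcongr
    _ = ε := ENNReal.add_thirds ε

lemma tendsto_of_mem_lpClosureIn (hp : 1 ≤ p) (hX : X ⊆ V) (hT : IsLpNonexpansiveOn p μ V T)
    {ι : Type*} {l : Filter ι} {S : ι → (α → E) → α → E}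
    (hS : ∀ i, IsLpNonexpansiveOn p μ V (S i))
    (h : ∀ g ∈ X, Tendsto (fun i => eLpNorm (S i g - T g) p μ) l (𝓝 0))
    {f : α → E} (hf : f ∈ lpClosureIn p μ V X) :
    Tendsto (fun i => eLpNorm (S i f - T f) p μ) l (𝓝 0) := by
  refine ENNReal.tendsto_nhds_zero.2 fun ε hε => ?_
  obtain ⟨g, hg, δ, hδ, hclose⟩ := hT.exists_forall_eLpNorm_map_sub_map_le hp hX hf hε
  filter_upwards [ENNReal.tendsto_nhds_zero.1 (h g hg) δ hδ] with i hi
  exact hclose (S i) (hS i) hi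

end IsLpNonexpansiveOn

lemma exists_seq_mem_tendsto_zero_of_forall_exists_le {ι : Type*} {s : Set ι} {φ : ι → ℝ≥0∞}
    (h : ∀ ε > 0, ∃ i ∈ s, φ i ≤ ε) :
    ∃ u : ℕ → ι, (∀ k, u k ∈ s) ∧ Tendsto (fun k => φ (u k)) atTop (𝓝 0) := by
  choose u hu hφ using fun k : ℕ => h (k : ℝ≥0∞)⁻¹ (ENNReal.inv_pos.2 (ENNReal.natCast_ne_top k))
  exact ⟨u, hu, tendsto_of_tendsto_of_tendsto_of_le_of_le tendsto_const_nhds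
    ENNReal.tendsto_inv_nat_nhds_zero (fun _ => zero_le) hφ⟩

theorem weakLpApproximable_lpClosureIn_iff (hp : 1 ≤ p) (hX : X ⊆ V)
    (hT : IsLpNonexpansiveOn p μ V T) (h𝒲 : ∀ W ∈ 𝒲, IsLpNonexpansiveOn p μ V W) :
    WeakLpApproximable p μ T 𝒲 X ↔ WeakLpApproximable p μ T 𝒲 (lpClosureIn p μ V X) := by
  refine ⟨fun h f hf => ?_, fun h f hf => h f (subset_lpClosureIn hX hf)⟩
  have hexists : ∀ ε > 0, ∃ W ∈ 𝒲, eLpNorm (W f - T f) p μ ≤ ε := fun ε hε => by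
    obtain ⟨g, hg, δ, hδ, hclose⟩ := hT.exists_forall_eLpNorm_map_sub_map_le hp hX hf hε
    obtain ⟨S, hS, hlim⟩ := h g hg
    obtain ⟨k, hk⟩ := (ENNReal.tendsto_nhds_zero.1 hlim δ hδ).exists
    exact ⟨S k, hS k, hclose (S k) (h𝒲 _ (hS k)) hk⟩
  exact exists_seq_mem_tendsto_zero_of_forall_exists_le hexists

theorem lpApproximable_lpClosureIn_iff (hp : 1 ≤ p) (hX : X ⊆ V)
    (hT : IsLpNonexpansiveOn p μ V T) (h𝒲 : ∀ W ∈ 𝒲, IsLpNonexpansiveOn p μ V W) :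
    LpApproximable p μ T 𝒲 X ↔ LpApproximable p μ T 𝒲 (lpClosureIn p μ V X) :=
  ⟨fun ⟨S, hS, h⟩ => ⟨S, hS, fun _ hf =>
    hT.tendsto_of_mem_lpClosureIn hp hX (fun k => h𝒲 _ (hS k)) h hf⟩,
    fun ⟨S, hS, h⟩ => ⟨S, hS, fun f hf => h f (subset_lpClosureIn hX hf)⟩⟩

theorem seqLpApproximable_lpClosureIn_iff (hp : 1 ≤ p) (hX : X ⊆ V)
    (hT : IsLpNonexpansiveOn p μ V T) (h𝒲 : ∀ W ∈ 𝒲, IsLpNonexpansiveOn p μ V W) :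
    SeqLpApproximable p μ T 𝒲 X ↔ SeqLpApproximable p μ T 𝒲 (lpClosureIn p μ V X) :=
  ⟨fun ⟨S, hS, h⟩ => ⟨S, hS, fun _ hf =>
    hT.tendsto_of_mem_lpClosureIn hp hX (.seqComp fun k => h𝒲 _ (hS k)) h hf⟩,
    fun ⟨S, hS, h⟩ => ⟨S, hS, fun f hf => h f (subset_lpClosureIn hX hf)⟩⟩

end Closure

theorem stmt17_general [SFinite μ] (hp : 1 ≤ p) {X : Set (α → ℝ)} (hX : X ⊆ vanishing μ)
    {T : (α → ℝ) → α → ℝ} (hT : IsRearrangementMap μ μ T)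
    {𝒲 : Set ((α → ℝ) → α → ℝ)} (h𝒲 : ∀ W ∈ 𝒲, IsRearrangementMap μ μ W) :
    (WeakLpApproximable p μ T 𝒲 X ↔
      WeakLpApproximable p μ T 𝒲 (lpClosureIn p μ (vanishing μ) X)) ∧
    (LpApproximable p μ T 𝒲 X ↔ LpApproximable p μ T 𝒲 (lpClosureIn p μ (vanishing μ) X)) ∧
    (SeqLpApproximable p μ T 𝒲 X ↔
      SeqLpApproximable p μ T 𝒲 (lpClosureIn p μ (vanishing μ) X)) :=
  have hT' := hT.isLpNonexpansiveOn hp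
  have h𝒲' : ∀ W ∈ 𝒲, IsLpNonexpansiveOn p μ (vanishing μ) W :=
    fun W hW => (h𝒲 W hW).isLpNonexpansiveOn hp
  ⟨weakLpApproximable_lpClosureIn_iff hp hX hT' h𝒲', lpApproximable_lpClosureIn_iff hp hX hT' h𝒲',
    seqLpApproximable_lpClosureIn_iff hp hX hT' h𝒲'⟩

section Euclidean

variable {n : ℕ}

lemma IsRearrangement.isRearrangementMap {T : (Euc n → ℝ) → Euc n → ℝ} (hT : IsRearrangement T) :
    IsRearrangementMap volume volume T :=
  ⟨hT.1, hT.2.1, fun f hf g hg => hT.2.2 f g hf hg⟩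

lemma inLpPlus.mem_vanishing {f : Euc n → ℝ} (hf : inLpPlus p f) (hp_ne : p ≠ 0)
    (hp_top : p ≠ ⊤) : f ∈ vanishing volume :=
  mem_vanishing_of_memLp hf.1 hf.2.1 ⟨hf.1.aestronglyMeasurable, hf.2.2.lt_top⟩ hp_ne hp_top

lemma clLp_eq_lpClosureIn_vanishing (hp_ne : p ≠ 0) (hp_top : p ≠ ⊤) {X : Set (Euc n → ℝ)}
    (hX : ∀ f ∈ X, inLpPlus p f) : clLp p X = lpClosureIn p volume (vanishing volume) X := by
  refine Set.Subset.antisymm (fun f hf => ⟨hf.1.mem_vanishing hp_ne hp_top, hf.2⟩)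
    fun f hf => ⟨⟨hf.1.1, hf.1.2.1, ?_⟩, hf.2⟩
  obtain ⟨g, hgX, hfg⟩ := hf.2 1 one_pos
  obtain ⟨hg, -, hg_fin⟩ := hX g hgX
  have hadd := eLpNorm_add_lt_top (p := p) (μ := volume)
    ⟨(hf.1.1.sub hg).aestronglyMeasurable, hfg.trans ENNReal.one_lt_top⟩
    ⟨hg.aestronglyMeasurable, hg_fin.lt_top⟩
  simpa only [sub_add_cancel] using hadd.ne

end Euclidean

end

/-- Lemma 5.1: for a rearrangement `T` and a family `𝒲` of rearrangements, (weak,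
plain, sequential) approximability in `Lᵖ` on `X ⊂ L^p_+(ℝⁿ)` by maps in `𝒲` is
equivalent to the corresponding approximability on the `Lᵖ` closure of `X`. -/
theorem stmt17 {n : ℕ} (p : ℝ≥0∞) (hp1 : 1 ≤ p) (hp2 : p ≠ ⊤)
    (X : Set (Euc n → ℝ)) (hX : ∀ f ∈ X, inLpPlus p f)
    (T : (Euc n → ℝ) → Euc n → ℝ) (hT : IsRearrangement T)
    (𝒲 : Set ((Euc n → ℝ) → Euc n → ℝ)) (h𝒲 : ∀ W ∈ 𝒲, IsRearrangement W) :
    (WeakApproxLp p T 𝒲 X ↔ WeakApproxLp p T 𝒲 (clLp p X)) ∧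
    (ApproxLp p T 𝒲 X ↔ ApproxLp p T 𝒲 (clLp p X)) ∧
    (SeqApproxLp p T 𝒲 X ↔ SeqApproxLp p T 𝒲 (clLp p X)) := by
  have hp_ne : p ≠ 0 := (zero_lt_one.trans_le hp1).ne'
  rw [clLp_eq_lpClosureIn_vanishing hp_ne hp2 hX]
  exact stmt17_general hp1 (fun f hf => (hX f hf).mem_vanishing hp_ne hp2) hT.isRearrangementMap
    fun W hW => (h𝒲 W hW).isRearrangementMap
end
end

section
/- Let 1 ≤ p < ∞, let T : 𝒱(ℝⁿ) → 𝒱(ℝⁿ) be a rearrangement, and let 𝒲 be a family of rearrangements from 𝒱(ℝⁿ) to 𝒱(ℝⁿ). The following are equivalent: (i) T is approximable in Lᵖ on L^p_+(ℝⁿ) by maps in 𝒲; (ii) the induced set map ∂_T is approximable on 𝓛ⁿ by maps in {∂_W : W ∈ 𝒲}; (iii) ∂_T is approximable on 𝒞ⁿ by maps in {∂_W : W ∈ 𝒲}. The equivalence remains true with 'approximable' replaced throughout by 'sequentially approximable'; moreover (i) ⇒ (ii) ⇔ (iii) holds with 'approximable' replaced throughout by 'weakly approximable'. -/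
open MeasureTheory Metric Filter Topology
open scoped ENNReal

noncomputable section

/-- Membership in `𝓛ⁿ`: measurable sets of finite measure. -/
def memLn {n : ℕ} (A : Set (Euc n)) : Prop := MeasurableSet A ∧ volume A ≠ ⊤

/-- Membership in `𝒞ⁿ`: nonempty compact sets. -/
def memCn {n : ℕ} (A : Set (Euc n)) : Prop := IsCompact A ∧ A.Nonempty

/-- The symmetric difference of two sets. -/
def sd {n : ℕ} (A B : Set (Euc n)) : Set (Euc n) := (A \ B) ∪ (B \ A)

/-- The set map induced by `T`: `∂_T A = {x : T 1_A (x) = 1}`. -/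
def indMap {n : ℕ} (T : (Euc n → ℝ) → Euc n → ℝ) (A : Set (Euc n)) : Set (Euc n) :=
  {x | T (A.indicator fun _ => (1 : ℝ)) x = 1}

/- Equimeasurability turns inclusions of superlevel sets into a.e. equalities. Cutting `f` off
outside `A = {t < f}` and comparing it with `1_A` therefore gives `∂_T {t < f} = {t < Tf}` a.e. for
`t ≥ 0`: a rearrangement acts on a function by acting on its superlevel sets through `∂_T`.
Consequently convergence of the set maps is convergence of all superlevel sets, hence convergence
in measure of `R_k f` to `Tf`; since `|{t < |R_k f - Tf|}| ≤ 2 |{t < f}|` for every `k`, the layer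
cake formula and dominated convergence in `t` upgrade it to convergence in `Lᵖ`. Compact sets
suffice, because they exhaust sets of finite measure from inside and every `∂_T` contracts the
measure of symmetric differences. -/

open scoped symmDiff

section Measure

variable {α ι E F : Type*} {mα : MeasurableSpace α} {μ : Measure α} {l : Filter ι}
  [NormedAddCommGroup E] [NormedAddCommGroup F] {p : ℝ≥0∞}

lemma exists_seq_mem_tendsto_zero {s : Set α} {d : α → ℝ≥0∞} (h : ∀ ε > 0, ∃ a ∈ s, d a ≤ ε) :
    ∃ a : ℕ → α, (∀ k, a k ∈ s) ∧ Tendsto (fun k => d (a k)) atTop (𝓝 0) := by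
  choose a ha hle using fun k : ℕ => h (k : ℝ≥0∞)⁻¹ (by simp)
  exact ⟨a, ha, tendsto_of_tendsto_of_tendsto_of_le_of_le tendsto_const_nhds
    ENNReal.tendsto_inv_nat_nhds_zero (fun _ => zero_le) hle⟩

lemma setOf_lt_indicator {A : Set α} {g : α → ℝ} {t : ℝ} (ht : 0 ≤ t) (hg : ∀ x ∈ A, t < g x) :
    {x | t < A.indicator g x} = A := by
  ext x
  by_cases hx : x ∈ A
  · simp [hx, hg x hx]
  · simp [hx, ht]

lemma tendsto_measure_superlevel_atTop {g : α → ℝ} (hg : AEMeasurable g μ) {t : ℝ}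
    (ht : μ {x | t < g x} ≠ ⊤) : Tendsto (fun M => μ {x | M < g x}) atTop (𝓝 0) := by
  have hempty : ⋂ M : ℝ, {x | M < g x} = ∅ :=
    Set.eq_empty_of_forall_notMem fun x hx => lt_irrefl (g x) (Set.mem_iInter.1 hx (g x))
  rw [← measure_empty (μ := μ), ← hempty]
  exact tendsto_measure_iInter_atTop (fun M => nullMeasurableSet_lt aemeasurable_const hg)
    (fun _ _ hMN _ hx => lt_of_le_of_lt hMN hx) ⟨t, ht⟩

lemma exists_nat_mul_mem_Ioo {a b δ : ℝ} (ha : 0 ≤ a) (hδ : 0 < δ) (hab : a + δ < b) {N : ℕ}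
    (haN : a ≤ N * δ) : ∃ j ≤ N, (j + 1) * δ ∈ Set.Ioo a b := by
  refine ⟨⌊a / δ⌋₊, Nat.floor_le_of_le ((div_le_iff₀ hδ).2 haN), ?_, ?_⟩
  · exact (div_lt_iff₀ hδ).1 (Nat.lt_floor_add_one _)
  · have := (le_div_iff₀ hδ).1 (Nat.floor_le (div_nonneg ha hδ.le))
    linarith

lemma setOf_le_norm_sub_subset {f g : α → ℝ} (hf : 0 ≤ f) (hg : 0 ≤ g) {δ ε : ℝ} (hδ : 0 < δ)
    (hδε : δ < ε) (N : ℕ) :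
    {x | ε ≤ ‖f x - g x‖} ⊆ {x | N * δ < g x} ∪
      ⋃ j ∈ Finset.range (N + 1), {x | (j + 1) * δ < f x} ∆ {x | (j + 1) * δ < g x} := by
  intro x hx
  refine or_iff_not_imp_left.2 fun hN => ?_
  have hgN : g x ≤ N * δ := not_lt.1 hN
  have hgap : min (f x) (g x) + δ < max (f x) (g x) := by
    have : ε ≤ max (f x) (g x) - min (f x) (g x) := by
      rw [max_sub_min_eq_abs']
      exact hx
    linarith
  obtain ⟨j, hj, hmin, hmax⟩ := exists_nat_mul_mem_Ioo (le_min (hf x) (hg x)) hδ hgap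
    ((min_le_right _ _).trans hgN)
  refine Set.mem_biUnion (Finset.mem_coe.2 (Finset.mem_range_succ_iff.2 hj)) ?_
  simp only [Set.mem_symmDiff, Set.mem_ofPred_eq, not_lt]
  rcases le_total (f x) (g x) with h | h
  · rw [min_eq_left h] at hmin
    rw [max_eq_right h] at hmax
    exact Or.inr ⟨hmax, hmin.le⟩
  · rw [min_eq_right h] at hmin
    rw [max_eq_left h] at hmax
    exact Or.inl ⟨hmax, hmin.le⟩

lemma tendstoInMeasure_of_tendsto_measure_symmDiff_superlevel {f : ι → α → ℝ} {g : α → ℝ}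
    (hf : ∀ i, 0 ≤ f i) (hg : 0 ≤ g) (hgtop : Tendsto (fun M => μ {x | M < g x}) atTop (𝓝 0))
    (h : ∀ t > 0, Tendsto (fun i => μ ({x | t < f i x} ∆ {x | t < g x})) l (𝓝 0)) :
    TendstoInMeasure μ f l g := by
  rw [tendstoInMeasure_iff_norm]
  refine fun ε hε => ENNReal.tendsto_nhds_zero.2 fun η hη => ?_
  have hη2 : 0 < η / 2 := ENNReal.half_pos hη.ne'
  have hδ : 0 < ε / 2 := half_pos hε
  obtain ⟨N, hN⟩ : ∃ N : ℕ, μ {x | N * (ε / 2) < g x} ≤ η / 2 :=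
    ((tendsto_natCast_atTop_atTop.atTop_mul_const hδ).eventually
      (ENNReal.tendsto_nhds_zero.1 hgtop _ hη2)).exists
  have hsum : Tendsto (fun i => ∑ j ∈ Finset.range (N + 1),
      μ ({x | (j + 1) * (ε / 2) < f i x} ∆ {x | (j + 1) * (ε / 2) < g x})) l (𝓝 0) := by
    simpa only [Finset.sum_const_zero] using
      tendsto_finsetSum (Finset.range (N + 1)) fun j _ => h ((j + 1) * (ε / 2)) (by positivity)
  filter_upwards [ENNReal.tendsto_nhds_zero.1 hsum _ hη2] with i hi
  calc μ {x | ε ≤ ‖f i x - g x‖}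
      ≤ μ {x | N * (ε / 2) < g x} + ∑ j ∈ Finset.range (N + 1),
          μ ({x | (j + 1) * (ε / 2) < f i x} ∆ {x | (j + 1) * (ε / 2) < g x}) :=
        (measure_mono (setOf_le_norm_sub_subset (hf i) hg hδ (half_lt_self hε) N)).trans <|
          (measure_union_le _ _).trans <| by gcongr; exact measure_biUnion_finset_le _ _
    _ ≤ η / 2 + η / 2 := add_le_add hN hi
    _ = η := ENNReal.add_halves η

lemma lintegral_enorm_rpow_eq_lintegral_meas_lt_mul {u : α → E} (hu : AEStronglyMeasurable u μ)
    {q : ℝ} (hq : 0 < q) :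
    ∫⁻ x, ‖u x‖ₑ ^ q ∂μ =
      ENNReal.ofReal q *
        ∫⁻ t in Set.Ioi (0 : ℝ), μ {x | t < ‖u x‖} * ENNReal.ofReal (t ^ (q - 1)) := by
  rw [← lintegral_rpow_eq_lintegral_meas_lt_mul μ (ae_of_all _ fun x => norm_nonneg (u x))
    hu.norm.aemeasurable hq]
  refine lintegral_congr fun x => ?_
  rw [← ofReal_norm, ENNReal.ofReal_rpow_of_nonneg (norm_nonneg _) hq.le]

lemma lintegral_meas_lt_mul_ne_top (hp0 : p ≠ 0) (hp : p ≠ ⊤) {u : α → E} (hu : MemLp u p μ) :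
    ∫⁻ t in Set.Ioi (0 : ℝ), μ {x | t < ‖u x‖} * ENNReal.ofReal (t ^ (p.toReal - 1)) ≠ ⊤ := by
  have hq : 0 < p.toReal := ENNReal.toReal_pos hp0 hp
  have hfin := lintegral_rpow_enorm_lt_top_of_eLpNorm_lt_top hp0 hp hu.2
  rw [lintegral_enorm_rpow_eq_lintegral_meas_lt_mul hu.1 hq] at hfin
  exact fun htop => hfin.ne (by rw [htop, ENNReal.mul_top (ENNReal.ofReal_pos.2 hq).ne'])

lemma measurable_measure_superlevel (u : α → ℝ) : Measurable fun t : ℝ => μ {x | t < u x} :=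
  Antitone.measurable fun _ _ hst => measure_mono fun _ hx => lt_of_le_of_lt hst hx

lemma tendsto_eLpNorm_zero_of_tendstoInMeasure [l.IsCountablyGenerated] (hp0 : p ≠ 0)
    (hp : p ≠ ⊤) {u : ι → α → E} {v : α → F} (hu : ∀ i, AEStronglyMeasurable (u i) μ)
    (hv : MemLp v p μ) {C : ℝ≥0∞} (hC : C ≠ ⊤)
    (hdom : ∀ i, ∀ t > 0, μ {x | t < ‖u i x‖} ≤ C * μ {x | t < ‖v x‖})
    (hlim : TendstoInMeasure μ u l 0) : Tendsto (fun i => eLpNorm (u i) p μ) l (𝓝 0) := by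
  have hq : 0 < p.toReal := ENNReal.toReal_pos hp0 hp
  have hlevel : ∀ t > 0, Tendsto (fun i => μ {x | t < ‖u i x‖}) l (𝓝 0) := fun t ht =>
    tendsto_of_tendsto_of_tendsto_of_le_of_le tendsto_const_nhds
      (tendstoInMeasure_iff_norm.1 hlim t ht) (fun _ => zero_le)
      fun i => measure_mono fun x (hx : t < ‖u i x‖) => by
        simpa only [Set.mem_ofPred_eq, Pi.zero_apply, sub_zero] using hx.le
  have hint : Tendsto (fun i => ∫⁻ x, ‖u i x‖ₑ ^ p.toReal ∂μ) l (𝓝 0) := by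
    simp only [fun i => lintegral_enorm_rpow_eq_lintegral_meas_lt_mul (hu i) hq]
    rw [← mul_zero (ENNReal.ofReal p.toReal),
      ← lintegral_zero (μ := volume.restrict (Set.Ioi (0 : ℝ)))]
    refine ENNReal.Tendsto.const_mul ?_ (Or.inr ENNReal.ofReal_ne_top)
    refine tendsto_lintegral_filter_of_dominated_convergence
      (fun t => C * (μ {x | t < ‖v x‖} * ENNReal.ofReal (t ^ (p.toReal - 1))))
      (Eventually.of_forall fun i => (measurable_measure_superlevel _).mul (by fun_prop))
      (Eventually.of_forall fun i => ae_restrict_of_forall_mem measurableSet_Ioi fun t ht => ?_)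
      ?_ (ae_restrict_of_forall_mem measurableSet_Ioi fun t ht => ?_)
    · rw [← mul_assoc]
      gcongr
      exact hdom i t ht
    · rw [lintegral_const_mul' _ _ hC]
      exact ENNReal.mul_ne_top hC (lintegral_meas_lt_mul_ne_top hp0 hp hv)
    · simpa only [zero_mul] using
        ENNReal.Tendsto.mul_const (hlevel t ht) (Or.inr ENNReal.ofReal_ne_top)
  simp only [eLpNorm_eq_lintegral_rpow_enorm_toReal hp0 hp]
  simpa only [ENNReal.zero_rpow_of_pos (one_div_pos.2 hq)] using
    hint.ennrpow_const (1 / p.toReal)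

end Measure

section Classes

variable {n : ℕ} {f g : Euc n → ℝ} {A : Set (Euc n)} {p : ℝ≥0∞}

lemma inV.mono (hg : inV g) (hf : Measurable f) (hf0 : 0 ≤ f) (hfg : f ≤ g) : inV f :=
  ⟨hf, hf0, fun t ht => measure_ne_top_of_subset
    (fun x (hx : t < f x) => hx.trans_le (hfg x)) (hg.2.2 t ht)⟩

lemma memLn.inV_indicator_one (hA : memLn A) : inV (A.indicator fun _ => (1 : ℝ)) := by
  refine ⟨measurable_const.indicator hA.1, Set.indicator_nonneg fun _ _ => zero_le_one,
    fun t ht => measure_ne_top_of_subset (fun x hx => ?_) hA.2⟩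
  exact Set.mem_of_indicator_ne_zero (ht.trans hx).ne'

lemma memLn.inLpPlus_indicator_one (hA : memLn A) : inLpPlus p (A.indicator fun _ => (1 : ℝ)) :=
  ⟨hA.inV_indicator_one.1, hA.inV_indicator_one.2.1,
    (memLp_indicator_const p hA.1 1 (Or.inr hA.2)).eLpNorm_ne_top⟩

lemma memCn.memLn (hA : memCn A) : memLn A :=
  ⟨hA.1.measurableSet, hA.1.measure_lt_top.ne⟩

lemma inLpPlus.memLp (hf : inLpPlus p f) : MemLp f p volume :=
  ⟨hf.1.aestronglyMeasurable, hf.2.2.lt_top⟩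

lemma inLpPlus.inV (hf : inLpPlus p f) (hp0 : p ≠ 0) (hp : p ≠ ⊤) : inV f := by
  refine ⟨hf.1, hf.2.1, fun t ht => measure_ne_top_of_subset (fun x (hx : t < f x) => ?_)
    (hf.memLp.meas_ge_lt_top hp0 hp (Real.toNNReal_pos.2 ht).ne').ne⟩
  exact Real.toNNReal_le_iff_le_coe.2 (hx.le.trans (Real.le_norm_self _))

lemma exists_memCn_subset (hA : memLn A) (hA0 : volume A ≠ 0) {ε : ℝ≥0∞} (hε : ε ≠ 0) :
    ∃ K ⊆ A, memCn K ∧ volume (A \ K) < ε := by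
  obtain ⟨K, hKA, hK, hlt⟩ :=
    hA.1.exists_isCompact_sdiff_lt hA.2
      (lt_min (pos_iff_ne_zero.2 hε) (pos_iff_ne_zero.2 hA0)).ne'
  rw [lt_min_iff] at hlt
  refine ⟨K, hKA, ⟨hK, Set.nonempty_iff_ne_empty.2 ?_⟩, hlt.1⟩
  rintro rfl
  exact hlt.2.ne (by rw [Set.sdiff_empty])

end Classes

namespace IsRearrangement

section SetMap

variable {n : ℕ} {T U : (Euc n → ℝ) → Euc n → ℝ} {f g : Euc n → ℝ} {A B : Set (Euc n)} {s t : ℝ}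

lemma congr_ae (hT : IsRearrangement T) (hf : inV f) (hg : inV g) (h : f =ᵐ[volume] g) :
    T f =ᵐ[volume] T g :=
  EventuallyLE.antisymm (hT.2.2 f g hf hg h.le) (hT.2.2 g f hg hf h.symm.le)

lemma superlevel_ae_eq (hT : IsRearrangement T) (hf : inV f) (hg : inV g) (hfg : f ≤ᵐ[volume] g)
    (hts : t ≤ s) (hvol : volume {x | t < g x} ≤ volume {x | s < f x})
    (hfin : volume {x | t < g x} ≠ ⊤) :
    ({x | s < T f x} : Set (Euc n)) =ᵐ[volume] {x | t < T g x} := by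
  refine ae_eq_of_ae_subset_of_measure_ge ?_ ?_
    (measurableSet_lt measurable_const (hT.1 f hf).1).nullMeasurableSet ?_
  · filter_upwards [hT.2.2 f g hf hg hfg] with x hx hs
    exact lt_of_le_of_lt hts (lt_of_lt_of_le hs hx)
  · rwa [hT.2.1 f hf, hT.2.1 g hg]
  · rwa [hT.2.1 g hg]

lemma indicator_one_ae_eq (hT : IsRearrangement T) (hA : memLn A) :
    T (A.indicator fun _ => (1 : ℝ)) =ᵐ[volume] (indMap T A).indicator fun _ => (1 : ℝ) := by
  set χ : Euc n → ℝ := A.indicator fun _ => (1 : ℝ)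
  have hχV : inV χ := hA.inV_indicator_one
  have hlevel : ∀ t : ℝ, 0 ≤ t → t < 1 → {x | t < χ x} = A := fun t ht0 ht1 =>
    setOf_lt_indicator ht0 fun _ _ => ht1
  have hχ1 : ∀ x, χ x ≤ 1 := Set.indicator_le_self' fun _ _ => zero_le_one
  have hle : ∀ᵐ x, T χ x ≤ 1 := by
    simp only [ae_iff, not_le]
    rw [hT.2.1 χ hχV, ← nonpos_iff_eq_zero, ← measure_empty (μ := (volume : Measure (Euc n)))]
    exact measure_mono fun x hx => absurd hx (not_lt.2 (hχ1 x))
  have hpos : ∀ᵐ x, ∀ q : ℚ, 0 ≤ (q : ℝ) → (q : ℝ) < 1 → 0 < T χ x → q < T χ x := by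
    refine ae_all_iff.2 fun q => ?_
    by_cases hq : 0 ≤ (q : ℝ) ∧ (q : ℝ) < 1
    · have hA0 := hlevel 0 le_rfl one_pos
      filter_upwards [hT.superlevel_ae_eq hχV hχV EventuallyLE.rfl hq.1
        (by rw [hA0, hlevel q hq.1 hq.2]) (by rw [hA0]; exact hA.2)] with x hx _ _
      exact hx.mpr
    · exact ae_of_all _ fun x h0 h1 => absurd ⟨h0, h1⟩ hq
  filter_upwards [hle, hpos] with x hx1 hx
  by_cases hmem : x ∈ indMap T A
  · rw [Set.indicator_of_mem hmem]
    exact hmem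
  · rw [Set.indicator_of_notMem hmem]
    by_contra hne
    have hx0 : 0 < T χ x := lt_of_le_of_ne ((hT.1 χ hχV).2.1 x) (Ne.symm hne)
    refine hmem (le_antisymm hx1 (le_of_forall_rat_lt_imp_le fun q hq => ?_))
    rcases le_total 0 (q : ℝ) with h0 | h0
    · exact (hx q h0 hq hx0).le
    · exact h0.trans hx0.le

lemma indMap_ae_eq_setOf_pos (hT : IsRearrangement T) (hA : memLn A) :
    indMap T A =ᵐ[volume] {x | 0 < T (A.indicator fun _ => (1 : ℝ)) x} := by
  refine eventuallyEq_set.2 ?_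
  filter_upwards [hT.indicator_one_ae_eq hA] with x hx
  rw [hx]
  by_cases hmem : x ∈ indMap T A <;> simp [hmem]

lemma volume_indMap (hT : IsRearrangement T) (hA : memLn A) :
    volume (indMap T A) = volume A := by
  rw [measure_congr (hT.indMap_ae_eq_setOf_pos hA), hT.2.1 _ hA.inV_indicator_one,
    setOf_lt_indicator le_rfl fun _ _ => one_pos]

lemma memLn_indMap (hT : IsRearrangement T) (hA : memLn A) : memLn (indMap T A) :=
  ⟨(hT.1 _ hA.inV_indicator_one).1 (measurableSet_singleton 1), by
    rw [hT.volume_indMap hA]; exact hA.2⟩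

lemma indMap_mono (hT : IsRearrangement T) (hA : memLn A) (hB : memLn B) (hAB : A ⊆ B) :
    indMap T A ≤ᵐ[volume] indMap T B := by
  refine (hT.indMap_ae_eq_setOf_pos hA).le.trans <|
    EventuallyLE.trans ?_ (hT.indMap_ae_eq_setOf_pos hB).symm.le
  filter_upwards [hT.2.2 _ _ hA.inV_indicator_one hB.inV_indicator_one (ae_of_all _ <|
    Set.indicator_le_indicator_of_subset hAB fun _ => zero_le_one)] with x hx hpos
  exact lt_of_lt_of_le hpos hx

lemma indMap_congr_ae (hT : IsRearrangement T) (hA : memLn A) (hB : memLn B)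
    (hAB : A =ᵐ[volume] B) : indMap T A =ᵐ[volume] indMap T B :=
  (hT.congr_ae hA.inV_indicator_one hB.inV_indicator_one
    (indicator_ae_eq_of_ae_eq_set hAB)).preimage {1}

lemma setOf_pos_indicator_ae_eq (hT : IsRearrangement T) (hA : memLn A)
    (hfA : inV (A.indicator f)) (hpos : ∀ x ∈ A, 0 < f x) :
    ({x | 0 < T (A.indicator f) x} : Set (Euc n)) =ᵐ[volume] indMap T A := by
  set h : Euc n → ℝ := A.indicator f
  set χ : Euc n → ℝ := A.indicator fun _ => (1 : ℝ)
  let m : Euc n → ℝ := fun x => min (h x) (χ x)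
  have hχ : inV χ := hA.inV_indicator_one
  have hmh : m ≤ h := fun x => min_le_left _ _
  have hmχ : m ≤ χ := fun x => min_le_right _ _
  have hm : inV m :=
    hfA.mono (hfA.1.min hχ.1) (fun x => le_min (hfA.2.1 x) (hχ.2.1 x)) hmh
  have hh0 : {x | 0 < h x} = A := setOf_lt_indicator le_rfl hpos
  have hχ0 : {x | 0 < χ x} = A := setOf_lt_indicator le_rfl fun _ _ => one_pos
  have hm0 : {x | 0 < m x} = A := by
    simp only [m, lt_min_iff, Set.ofPred_and, hh0, hχ0, Set.inter_self]
  have hTmh : ({x | 0 < T m x} : Set (Euc n)) =ᵐ[volume] {x | 0 < T h x} :=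
    hT.superlevel_ae_eq hm hfA (ae_of_all _ hmh) le_rfl (by rw [hh0, hm0]) (hh0 ▸ hA.2)
  have hTmχ : ({x | 0 < T m x} : Set (Euc n)) =ᵐ[volume] {x | 0 < T χ x} :=
    hT.superlevel_ae_eq hm hχ (ae_of_all _ hmχ) le_rfl (by rw [hχ0, hm0]) (hχ0 ▸ hA.2)
  exact hTmh.symm.trans <| hTmχ.trans (hT.indMap_ae_eq_setOf_pos hA).symm

lemma indMap_superlevel_ae_eq (hT : IsRearrangement T) (hf : inV f) (ht : 0 ≤ t)
    (hfin : volume {x | t < f x} ≠ ⊤) :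
    indMap T {x | t < f x} =ᵐ[volume] {x | t < T f x} := by
  set A : Set (Euc n) := {x | t < f x}
  have hA : memLn A := ⟨measurableSet_lt measurable_const hf.1, hfin⟩
  have hpos : ∀ x ∈ A, 0 < f x := fun x hx => lt_of_le_of_lt ht hx
  set h : Euc n → ℝ := A.indicator f
  have hhf : h ≤ f := Set.indicator_le_self' fun x _ => hf.2.1 x
  have hh : inV h := hf.mono (hf.1.indicator hA.1) (Set.indicator_nonneg fun x _ => hf.2.1 x) hhf
  have hh0 : {x | 0 < h x} = A := setOf_lt_indicator le_rfl hpos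
  have hht : {x | t < h x} = A := setOf_lt_indicator ht fun _ hx => hx
  have hTh : ({x | t < T h x} : Set (Euc n)) =ᵐ[volume] {x | 0 < T h x} :=
    hT.superlevel_ae_eq hh hh EventuallyLE.rfl ht (by rw [hh0, hht]) (hh0 ▸ hA.2)
  have hThf : ({x | t < T h x} : Set (Euc n)) =ᵐ[volume] {x | t < T f x} :=
    hT.superlevel_ae_eq hh hf (ae_of_all _ hhf) le_rfl (by rw [hht]) hfin
  exact (hT.setOf_pos_indicator_ae_eq hA hh hpos).symm.trans <| hTh.symm.trans hThf

lemma volume_indMap_sdiff_le (hT : IsRearrangement T) (hA : memLn A) (hB : memLn B) :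
    volume (indMap T A \ indMap T B) ≤ volume (A \ B) := by
  have hI : memLn (A ∩ B) := ⟨hA.1.inter hB.1, measure_ne_top_of_subset Set.inter_subset_left hA.2⟩
  have hIA : (indMap T A ∩ indMap T (A ∩ B) : Set (Euc n)) =ᵐ[volume] indMap T (A ∩ B) :=
    inter_eventuallyEq_right.2 (hT.indMap_mono hI hA Set.inter_subset_left)
  have hIB := hT.indMap_mono hI hB Set.inter_subset_right
  have hcancel : volume (indMap T A \ indMap T (A ∩ B)) + volume (A ∩ B) =
      volume (A \ B) + volume (A ∩ B) := by
    calc volume (indMap T A \ indMap T (A ∩ B)) + volume (A ∩ B)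
        = volume (indMap T A \ indMap T (A ∩ B)) + volume (indMap T A ∩ indMap T (A ∩ B)) := by
          rw [measure_congr hIA, hT.volume_indMap hI]
      _ = volume (indMap T A) := measure_sdiff_add_inter _ (hT.memLn_indMap hI).1
      _ = volume (A \ B) + volume (A ∩ B) := by
          rw [hT.volume_indMap hA, measure_sdiff_add_inter A hB.1]
  calc volume (indMap T A \ indMap T B)
      ≤ volume (indMap T A \ indMap T (A ∩ B)) := measure_mono_ae (EventuallyLE.rfl.diff hIB)
    _ = volume (A \ B) := (ENNReal.add_left_inj hI.2).1 hcancel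

lemma volume_symmDiff_indMap_le (hT : IsRearrangement T) (hA : memLn A) (hB : memLn B) :
    volume (indMap T A ∆ indMap T B) ≤ volume (A ∆ B) := by
  rw [measure_symmDiff_eq hA.1.nullMeasurableSet hB.1.nullMeasurableSet]
  exact (measure_union_le _ _).trans
    (add_le_add (hT.volume_indMap_sdiff_le hA hB) (hT.volume_indMap_sdiff_le hB hA))

lemma comp (hU : IsRearrangement U) (hT : IsRearrangement T) : IsRearrangement (U ∘ T) :=
  ⟨fun f hf => hU.1 _ (hT.1 f hf),
    fun f hf t => (hU.2.1 _ (hT.1 f hf) t).trans (hT.2.1 f hf t),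
    fun f g hf hg h => hU.2.2 _ _ (hT.1 f hf) (hT.1 g hg) (hT.2.2 f g hf hg h)⟩

lemma indMap_comp (hU : IsRearrangement U) (hT : IsRearrangement T) (hA : memLn A) :
    indMap (U ∘ T) A =ᵐ[volume] indMap U (indMap T A) :=
  (hU.congr_ae (hT.1 _ hA.inV_indicator_one) (hT.memLn_indMap hA).inV_indicator_one
    (hT.indicator_one_ae_eq hA)).preimage {1}

end SetMap

section Sequence

variable {n : ℕ} {S : ℕ → (Euc n → ℝ) → Euc n → ℝ} {A : Set (Euc n)}

lemma seqComp (hS : ∀ k, IsRearrangement (S k)) (k : ℕ) : IsRearrangement (seqComp S k) := by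
  induction k with
  | zero => exact hS 0
  | succ k ih => exact (hS (k + 1)).comp ih

lemma memLn_seqComp_indMap (hS : ∀ k, IsRearrangement (S k)) (hA : memLn A) (k : ℕ) :
    memLn (_root_.seqComp (fun j => indMap (S j)) k A) := by
  induction k with
  | zero => exact (hS 0).memLn_indMap hA
  | succ k ih => exact (hS (k + 1)).memLn_indMap ih

lemma seqComp_indMap_ae_eq (hS : ∀ k, IsRearrangement (S k)) (hA : memLn A) (k : ℕ) :
    _root_.seqComp (fun j => indMap (S j)) k A =ᵐ[volume] indMap (_root_.seqComp S k) A := by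
  induction k with
  | zero => rfl
  | succ k ih =>
    exact ((hS (k + 1)).indMap_congr_ae (memLn_seqComp_indMap hS hA k)
      ((seqComp hS k).memLn_indMap hA) ih).trans ((hS (k + 1)).indMap_comp (seqComp hS k) hA).symm

end Sequence

end IsRearrangement

section Convergence

/-- `R k f → T f` in `Lᵖ` for every `f ∈ L^p_+(ℝⁿ)`: the mode of convergence in the paper's
approximability of `T` in `Lᵖ` on `L^p_+(ℝⁿ)`. -/
def TendstoInLp {n : ℕ} (p : ℝ≥0∞) (R : ℕ → (Euc n → ℝ) → Euc n → ℝ)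
    (T : (Euc n → ℝ) → Euc n → ℝ) : Prop :=
  ∀ f, inLpPlus p f → Tendsto (fun k => eLpNorm (R k f - T f) p volume) atTop (𝓝 0)

/-- `D k A → E A` in measure for every `A ∈ 𝓔`: the mode of convergence in the paper's
approximability of a set map on `𝓔`. The `L¹` distance of the indicators of two sets is
written as the measure of their symmetric difference. -/
def TendstoOn {n : ℕ} (𝓔 : Set (Euc n) → Prop) (D : ℕ → Set (Euc n) → Set (Euc n))
    (E : Set (Euc n) → Set (Euc n)) : Prop :=
  ∀ A, 𝓔 A → Tendsto (fun k => volume (D k A ∆ E A)) atTop (𝓝 0)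

variable {n : ℕ} {p : ℝ≥0∞} {R : ℕ → (Euc n → ℝ) → Euc n → ℝ} {T : (Euc n → ℝ) → Euc n → ℝ}
  {f : Euc n → ℝ} {A : Set (Euc n)}

-- `{0}` serves a null set `A`, whose only compact subset may be empty.
lemma exists_memCn_volume_symmDiff_indMap_le (hT : IsRearrangement T) (hA : memLn A) {ε : ℝ≥0∞}
    (hε : ε ≠ 0) : ∃ K, memCn K ∧ ∀ W, IsRearrangement W →
      volume (indMap W A ∆ indMap T A) ≤ volume (indMap W K ∆ indMap T K) + ε := by
  by_cases hA0 : volume A = 0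
  · refine ⟨{0}, ⟨isCompact_singleton, Set.singleton_nonempty 0⟩, fun W hW => ?_⟩
    have hnull : volume (indMap W A ∆ indMap T A) = 0 :=
      measure_mono_null Set.symmDiff_subset_union
        (measure_union_null ((hW.volume_indMap hA).trans hA0) ((hT.volume_indMap hA).trans hA0))
    exact hnull.trans_le zero_le
  · obtain ⟨K, hKA, hK, hlt⟩ := exists_memCn_subset hA hA0 (ENNReal.half_pos hε).ne'
    refine ⟨K, hK, fun W hW => ?_⟩
    have hAK : volume (A ∆ K) ≤ ε / 2 := by
      rw [symmDiff_of_ge hKA]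
      exact hlt.le
    calc volume (indMap W A ∆ indMap T A)
        ≤ volume (indMap W A ∆ indMap W K) + volume (indMap W K ∆ indMap T A) :=
          measure_symmDiff_le _ _ _
      _ ≤ volume (indMap W A ∆ indMap W K) +
            (volume (indMap W K ∆ indMap T K) + volume (indMap T K ∆ indMap T A)) := by
          gcongr
          exact measure_symmDiff_le _ _ _
      _ ≤ ε / 2 + (volume (indMap W K ∆ indMap T K) + ε / 2) := by
          gcongr
          · exact (hW.volume_symmDiff_indMap_le hA hK.memLn).trans hAK
          · rw [symmDiff_comm]
            exact (hT.volume_symmDiff_indMap_le hA hK.memLn).trans hAK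
      _ = volume (indMap W K ∆ indMap T K) + ε := by
          rw [add_left_comm, ENNReal.add_halves]

lemma tendstoOn_memLn_iff_memCn (hR : ∀ k, IsRearrangement (R k)) (hT : IsRearrangement T) :
    TendstoOn memLn (fun k => indMap (R k)) (indMap T) ↔
      TendstoOn memCn (fun k => indMap (R k)) (indMap T) := by
  refine ⟨fun h A hA => h A hA.memLn, fun h A hA => ENNReal.tendsto_nhds_zero.2 fun ε hε => ?_⟩
  have hε2 : 0 < ε / 2 := ENNReal.half_pos hε.ne'
  obtain ⟨K, hK, hle⟩ := exists_memCn_volume_symmDiff_indMap_le hT hA hε2.ne'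
  filter_upwards [ENNReal.tendsto_nhds_zero.1 (h K hK) _ hε2] with k hk
  calc volume (indMap (R k) A ∆ indMap T A)
      ≤ volume (indMap (R k) K ∆ indMap T K) + ε / 2 := hle _ (hR k)
    _ ≤ ε / 2 + ε / 2 := by gcongr
    _ = ε := ENNReal.add_halves ε

lemma exists_seq_tendsto_indMap_of_forall_memCn (hT : IsRearrangement T)
    {𝒲 : Set ((Euc n → ℝ) → Euc n → ℝ)} (h𝒲 : ∀ W ∈ 𝒲, IsRearrangement W)
    (h : ∀ K, memCn K → ∃ S : ℕ → (Euc n → ℝ) → Euc n → ℝ, (∀ k, S k ∈ 𝒲) ∧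
      Tendsto (fun k => volume (indMap (S k) K ∆ indMap T K)) atTop (𝓝 0)) (hA : memLn A) :
    ∃ S : ℕ → (Euc n → ℝ) → Euc n → ℝ, (∀ k, S k ∈ 𝒲) ∧
      Tendsto (fun k => volume (indMap (S k) A ∆ indMap T A)) atTop (𝓝 0) := by
  refine exists_seq_mem_tendsto_zero (d := fun W => volume (indMap W A ∆ indMap T A)) fun ε hε => ?_
  have hε2 : 0 < ε / 2 := ENNReal.half_pos hε.ne'
  obtain ⟨K, hK, hle⟩ := exists_memCn_volume_symmDiff_indMap_le hT hA hε2.ne'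
  obtain ⟨S, hS, hlim⟩ := h K hK
  obtain ⟨k, hk⟩ := (ENNReal.tendsto_nhds_zero.1 hlim _ hε2).exists
  refine ⟨S k, hS k, ?_⟩
  calc volume (indMap (S k) A ∆ indMap T A)
      ≤ volume (indMap (S k) K ∆ indMap T K) + ε / 2 := hle _ (h𝒲 _ (hS k))
    _ ≤ ε / 2 + ε / 2 := by gcongr
    _ = ε := ENNReal.add_halves ε

lemma tendsto_indMap_of_tendsto_eLpNorm (hR : ∀ k, IsRearrangement (R k))
    (hT : IsRearrangement T) (hp0 : p ≠ 0) (hA : memLn A)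
    (h : Tendsto (fun k => eLpNorm (R k (A.indicator fun _ => (1 : ℝ)) -
      T (A.indicator fun _ => (1 : ℝ))) p volume) atTop (𝓝 0)) :
    Tendsto (fun k => volume (indMap (R k) A ∆ indMap T A)) atTop (𝓝 0) := by
  have hmeas : ∀ {W : (Euc n → ℝ) → Euc n → ℝ}, IsRearrangement W →
      AEStronglyMeasurable (W (A.indicator fun _ => (1 : ℝ))) volume :=
    fun hW => (hW.1 _ hA.inV_indicator_one).1.aestronglyMeasurable
  have hlim : TendstoInMeasure volume (fun k => R k (A.indicator fun _ => (1 : ℝ))) atTop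
      (T (A.indicator fun _ => (1 : ℝ))) :=
    tendstoInMeasure_of_tendsto_eLpNorm hp0 (fun k => hmeas (hR k)) (hmeas hT) h
  refine (tendstoInMeasure_iff_norm.1 hlim 1 one_pos).congr fun k =>
    measure_congr (eventuallyEq_set.2 ?_)
  filter_upwards [(hR k).indicator_one_ae_eq hA, hT.indicator_one_ae_eq hA] with x hRx hTx
  rw [hRx, hTx, Set.mem_symmDiff]
  by_cases hxR : x ∈ indMap (R k) A <;> by_cases hxT : x ∈ indMap T A <;> simp [hxR, hxT]

lemma tendstoInMeasure_of_tendstoOn_indMap (hR : ∀ k, IsRearrangement (R k))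
    (hT : IsRearrangement T) (h : TendstoOn memLn (fun k => indMap (R k)) (indMap T))
    (hf : inV f) : TendstoInMeasure volume (fun k => R k f) atTop (T f) := by
  have hTf := hT.1 f hf
  refine tendstoInMeasure_of_tendsto_measure_symmDiff_superlevel (fun k => ((hR k).1 f hf).2.1)
    hTf.2.1 (tendsto_measure_superlevel_atTop hTf.1.aemeasurable (hTf.2.2 1 one_pos))
    fun t ht => ?_
  have hfin := hf.2.2 t ht
  refine (h {x | t < f x} ⟨measurableSet_lt measurable_const hf.1, hfin⟩).congr fun k => ?_
  exact measure_congr (((hR k).indMap_superlevel_ae_eq hf ht.le hfin).symmDiff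
    (hT.indMap_superlevel_ae_eq hf ht.le hfin))

lemma volume_superlevel_norm_sub_le {W : (Euc n → ℝ) → Euc n → ℝ} (hW : IsRearrangement W)
    (hT : IsRearrangement T) (hf : inV f) (t : ℝ) :
    volume {x | t < ‖(W f - T f) x‖} ≤ 2 * volume {x | t < f x} := by
  have hsub : {x | t < ‖(W f - T f) x‖} ⊆ {x | t < W f x} ∪ {x | t < T f x} :=
    fun x (hx : t < |W f x - T f x|) => lt_max_iff.1 <| hx.trans_le <|
      abs_sub_le_of_nonneg_of_le ((hW.1 f hf).2.1 x) (le_max_left _ _)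
        ((hT.1 f hf).2.1 x) (le_max_right _ _)
  calc volume {x | t < ‖(W f - T f) x‖}
      ≤ volume {x | t < W f x} + volume {x | t < T f x} :=
        (measure_mono hsub).trans (measure_union_le _ _)
    _ = 2 * volume {x | t < f x} := by rw [hW.2.1 f hf, hT.2.1 f hf, two_mul]

theorem tendstoInLp_iff_tendstoOn_indMap (hR : ∀ k, IsRearrangement (R k))
    (hT : IsRearrangement T) (hp0 : p ≠ 0) (hp : p ≠ ⊤) :
    TendstoInLp p R T ↔ TendstoOn memLn (fun k => indMap (R k)) (indMap T) := by
  refine ⟨fun h A hA => tendsto_indMap_of_tendsto_eLpNorm hR hT hp0 hA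
    (h _ hA.inLpPlus_indicator_one), fun h f hf => ?_⟩
  have hfV := hf.inV hp0 hp
  refine tendsto_eLpNorm_zero_of_tendstoInMeasure (C := 2) hp0 hp
    (fun k => (((hR k).1 f hfV).1.sub (hT.1 f hfV).1).aestronglyMeasurable) hf.memLp
    ENNReal.ofNat_ne_top (fun k t _ => ?_) ?_
  · simp only [Real.norm_of_nonneg (hf.2.1 _)]
    exact volume_superlevel_norm_sub_le (hR k) hT hfV t
  · have := tendstoInMeasure_iff_norm.1 (tendstoInMeasure_of_tendstoOn_indMap hR hT h hfV)
    exact tendstoInMeasure_iff_norm.2 (by simpa only [Pi.sub_apply, Pi.zero_apply, sub_zero])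

lemma tendstoOn_seqComp_indMap_iff {𝓔 : Set (Euc n) → Prop} (h𝓔 : ∀ A, 𝓔 A → memLn A)
    (hR : ∀ k, IsRearrangement (R k)) (E : Set (Euc n) → Set (Euc n)) :
    TendstoOn 𝓔 (seqComp fun j => indMap (R j)) E ↔
      TendstoOn 𝓔 (fun k => indMap (seqComp R k)) E :=
  forall₂_congr fun A hA => tendsto_congr fun k => measure_congr
    ((IsRearrangement.seqComp_indMap_ae_eq hR (h𝓔 A hA) k).symmDiff EventuallyEq.rfl)

end Convergence

theorem stmt18_general {n : ℕ} (p : ℝ≥0∞) (hp0 : p ≠ 0) (hp : p ≠ ⊤)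
    (T : (Euc n → ℝ) → Euc n → ℝ) (hT : IsRearrangement T)
    (𝒲 : Set ((Euc n → ℝ) → Euc n → ℝ)) (h𝒲 : ∀ W ∈ 𝒲, IsRearrangement W) :
    ((∃ S : ℕ → (Euc n → ℝ) → Euc n → ℝ, (∀ k, S k ∈ 𝒲) ∧ TendstoInLp p S T) ↔
      ∃ S : ℕ → (Euc n → ℝ) → Euc n → ℝ, (∀ k, S k ∈ 𝒲) ∧
        TendstoOn memLn (fun k => indMap (S k)) (indMap T)) ∧
    ((∃ S : ℕ → (Euc n → ℝ) → Euc n → ℝ, (∀ k, S k ∈ 𝒲) ∧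
        TendstoOn memLn (fun k => indMap (S k)) (indMap T)) ↔
      ∃ S : ℕ → (Euc n → ℝ) → Euc n → ℝ, (∀ k, S k ∈ 𝒲) ∧
        TendstoOn memCn (fun k => indMap (S k)) (indMap T)) ∧
    ((∃ S : ℕ → (Euc n → ℝ) → Euc n → ℝ, (∀ k, S k ∈ 𝒲) ∧ TendstoInLp p (seqComp S) T) ↔
      ∃ S : ℕ → (Euc n → ℝ) → Euc n → ℝ, (∀ k, S k ∈ 𝒲) ∧
        TendstoOn memLn (seqComp fun j => indMap (S j)) (indMap T)) ∧
    ((∃ S : ℕ → (Euc n → ℝ) → Euc n → ℝ, (∀ k, S k ∈ 𝒲) ∧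
        TendstoOn memLn (seqComp fun j => indMap (S j)) (indMap T)) ↔
      ∃ S : ℕ → (Euc n → ℝ) → Euc n → ℝ, (∀ k, S k ∈ 𝒲) ∧
        TendstoOn memCn (seqComp fun j => indMap (S j)) (indMap T)) ∧
    ((∀ f : Euc n → ℝ, inLpPlus p f →
        ∃ S : ℕ → (Euc n → ℝ) → Euc n → ℝ, (∀ k, S k ∈ 𝒲) ∧
          Tendsto (fun k => eLpNorm (S k f - T f) p volume) atTop (𝓝 0)) →
      ∀ A : Set (Euc n), memLn A →
        ∃ S : ℕ → (Euc n → ℝ) → Euc n → ℝ, (∀ k, S k ∈ 𝒲) ∧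
          Tendsto (fun k => volume (indMap (S k) A ∆ indMap T A)) atTop (𝓝 0)) ∧
    ((∀ A : Set (Euc n), memLn A →
        ∃ S : ℕ → (Euc n → ℝ) → Euc n → ℝ, (∀ k, S k ∈ 𝒲) ∧
          Tendsto (fun k => volume (indMap (S k) A ∆ indMap T A)) atTop (𝓝 0)) ↔
      ∀ A : Set (Euc n), memCn A →
        ∃ S : ℕ → (Euc n → ℝ) → Euc n → ℝ, (∀ k, S k ∈ 𝒲) ∧
          Tendsto (fun k => volume (indMap (S k) A ∆ indMap T A)) atTop (𝓝 0)) := by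
  have hrearr : ∀ {S : ℕ → (Euc n → ℝ) → Euc n → ℝ}, (∀ k, S k ∈ 𝒲) →
      ∀ k, IsRearrangement (S k) := fun hS k => h𝒲 _ (hS k)
  have hcomp : ∀ {S : ℕ → (Euc n → ℝ) → Euc n → ℝ}, (∀ k, S k ∈ 𝒲) →
      ∀ k, IsRearrangement (seqComp S k) := fun hS => IsRearrangement.seqComp (hrearr hS)
  refine ⟨exists_congr fun S => and_congr_right fun hS => ?_,
    exists_congr fun S => and_congr_right fun hS => ?_,
    exists_congr fun S => and_congr_right fun hS => ?_,
    exists_congr fun S => and_congr_right fun hS => ?_, fun h A hA => ?_,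
    fun h A hA => h A hA.memLn, fun h A => exists_seq_tendsto_indMap_of_forall_memCn hT h𝒲 h⟩
  · exact tendstoInLp_iff_tendstoOn_indMap (hrearr hS) hT hp0 hp
  · exact tendstoOn_memLn_iff_memCn (hrearr hS) hT
  · rw [tendstoOn_seqComp_indMap_iff (fun _ => id) (hrearr hS)]
    exact tendstoInLp_iff_tendstoOn_indMap (hcomp hS) hT hp0 hp
  · rw [tendstoOn_seqComp_indMap_iff (fun _ => id) (hrearr hS),
      tendstoOn_seqComp_indMap_iff (fun _ => memCn.memLn) (hrearr hS)]
    exact tendstoOn_memLn_iff_memCn (hcomp hS) hT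
  · obtain ⟨S, hS, hlim⟩ := h _ hA.inLpPlus_indicator_one
    exact ⟨S, hS, tendsto_indMap_of_tendsto_eLpNorm (hrearr hS) hT hp0 hA hlim⟩

/-- Theorem 5.2: for a rearrangement `T` and a family `𝒲` of rearrangements, `T` is
(resp. sequentially) approximable in `Lᵖ` on `L^p_+(ℝⁿ)` by maps in `𝒲` iff `∂_T` is
(resp. sequentially) approximable on `𝓛ⁿ` by the induced set maps, iff the same holds on
`𝒞ⁿ`; moreover the implication (i) ⇒ (ii) ⇔ (iii) holds for weak approximability. -/
theorem stmt18 {n : ℕ} (p : ℝ≥0∞) (hp1 : 1 ≤ p) (hp2 : p ≠ ⊤)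
    (T : (Euc n → ℝ) → Euc n → ℝ) (hT : IsRearrangement T)
    (𝒲 : Set ((Euc n → ℝ) → Euc n → ℝ)) (h𝒲 : ∀ W ∈ 𝒲, IsRearrangement W) :
    ((∃ S : ℕ → (Euc n → ℝ) → Euc n → ℝ, (∀ k, S k ∈ 𝒲) ∧
        ∀ f : Euc n → ℝ, inLpPlus p f →
          Tendsto (fun k => eLpNorm (S k f - T f) p volume) atTop (𝓝 0)) ↔
      (∃ S : ℕ → (Euc n → ℝ) → Euc n → ℝ, (∀ k, S k ∈ 𝒲) ∧
        ∀ A : Set (Euc n), memLn A →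
          Tendsto (fun k => volume (sd (indMap (S k) A) (indMap T A))) atTop (𝓝 0))) ∧
    ((∃ S : ℕ → (Euc n → ℝ) → Euc n → ℝ, (∀ k, S k ∈ 𝒲) ∧
        ∀ A : Set (Euc n), memLn A →
          Tendsto (fun k => volume (sd (indMap (S k) A) (indMap T A))) atTop (𝓝 0)) ↔
      (∃ S : ℕ → (Euc n → ℝ) → Euc n → ℝ, (∀ k, S k ∈ 𝒲) ∧
        ∀ A : Set (Euc n), memCn A →
          Tendsto (fun k => volume (sd (indMap (S k) A) (indMap T A))) atTop (𝓝 0))) ∧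
    ((∃ S : ℕ → (Euc n → ℝ) → Euc n → ℝ, (∀ k, S k ∈ 𝒲) ∧
        ∀ f : Euc n → ℝ, inLpPlus p f →
          Tendsto (fun k => eLpNorm (seqComp S k f - T f) p volume) atTop (𝓝 0)) ↔
      (∃ S : ℕ → (Euc n → ℝ) → Euc n → ℝ, (∀ k, S k ∈ 𝒲) ∧
        ∀ A : Set (Euc n), memLn A →
          Tendsto (fun k => volume (sd (seqComp (fun j => indMap (S j)) k A)
            (indMap T A))) atTop (𝓝 0))) ∧
    ((∃ S : ℕ → (Euc n → ℝ) → Euc n → ℝ, (∀ k, S k ∈ 𝒲) ∧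
        ∀ A : Set (Euc n), memLn A →
          Tendsto (fun k => volume (sd (seqComp (fun j => indMap (S j)) k A)
            (indMap T A))) atTop (𝓝 0)) ↔
      (∃ S : ℕ → (Euc n → ℝ) → Euc n → ℝ, (∀ k, S k ∈ 𝒲) ∧
        ∀ A : Set (Euc n), memCn A →
          Tendsto (fun k => volume (sd (seqComp (fun j => indMap (S j)) k A)
            (indMap T A))) atTop (𝓝 0))) ∧
    (((∀ f : Euc n → ℝ, inLpPlus p f →
        ∃ S : ℕ → (Euc n → ℝ) → Euc n → ℝ, (∀ k, S k ∈ 𝒲) ∧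
          Tendsto (fun k => eLpNorm (S k f - T f) p volume) atTop (𝓝 0)) →
      (∀ A : Set (Euc n), memLn A →
        ∃ S : ℕ → (Euc n → ℝ) → Euc n → ℝ, (∀ k, S k ∈ 𝒲) ∧
          Tendsto (fun k => volume (sd (indMap (S k) A) (indMap T A))) atTop (𝓝 0))) ∧
      ((∀ A : Set (Euc n), memLn A →
        ∃ S : ℕ → (Euc n → ℝ) → Euc n → ℝ, (∀ k, S k ∈ 𝒲) ∧
          Tendsto (fun k => volume (sd (indMap (S k) A) (indMap T A))) atTop (𝓝 0)) ↔
      (∀ A : Set (Euc n), memCn A →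
        ∃ S : ℕ → (Euc n → ℝ) → Euc n → ℝ, (∀ k, S k ∈ 𝒲) ∧
          Tendsto (fun k => volume (sd (indMap (S k) A) (indMap T A))) atTop (𝓝 0)))) :=
  stmt18_general p (one_pos.trans_le hp1).ne' hp2 T hT 𝒲 h𝒲
end
end
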